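/- Let π ∈ S_n and let S be a 1-subgraph of the inversion graph G_π. If S is valid then S is P⃗₂-free, i.e., there is no triple i < j < k with both (i,j) ∈ S and (j,k) ∈ S. Consequently, |Fib_n(π)| ≤ |{S ∈ Sub(π) : S is P⃗₂-free}|. -/

import Mathlib

/- Common definitions: the classical and MVP parking processes, parking
functions, inversion graphs and 1-subgraphs, Motzkin paths, and sandpile
configurations on complete graphs. Spots, cars and vertices are 0-indexed
(element `i : Fin n` corresponds to the 1-indexed `i+1` of the paper). -/

namespace MVPPaper

open Finset

variable {n : ℕ}

/-- The first unoccupied spot `k ≥ s` in the occupancy `occ`, if any exists.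
`occ k = some i` means spot `k` is occupied by car `i`. -/
def firstFree (occ : Fin n → Option (Fin n)) (s : Fin n) : Option (Fin n) :=
  (List.finRange n).find? fun k => decide (s ≤ k) && (occ k).isNone

/-- One step of the classical parking process: car `i`, preferring spot `s`,
parks in the first free spot `k ≥ s` (failure if none exists). -/
def classicalStep (occ : Fin n → Option (Fin n)) (i s : Fin n) :
    Option (Fin n → Option (Fin n)) :=
  (firstFree occ s).map fun k => Function.update occ k (some i)

/-- One step of the MVP parking process: car `i` parks in its preferred spot
`s`; if `s` was occupied by an earlier car `j`, then `j` is bumped out and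
drives on to the first free spot `k ≥ s` (failure if none exists). -/
def mvpStep (occ : Fin n → Option (Fin n)) (i s : Fin n) :
    Option (Fin n → Option (Fin n)) :=
  match occ s with
  | none => some (Function.update occ s (some i))
  | some j =>
      (firstFree (Function.update occ s (some i)) s).map fun k =>
        Function.update (Function.update occ s (some i)) k (some j)

/-- Run a parking process: cars `0, 1, …, n-1` enter in order, with car `i`
preferring spot `p i`. Returns the final occupancy, or `none` on failure. -/
def runProcess
    (step : (Fin n → Option (Fin n)) → Fin n → Fin n → Option (Fin n → Option (Fin n)))
    (p : Fin n → Fin n) : Option (Fin n → Option (Fin n)) :=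
  List.foldlM (fun occ i => step occ i (p i)) (fun _ => none) (List.finRange n)

def mvpRun (p : Fin n → Fin n) : Option (Fin n → Option (Fin n)) :=
  runProcess mvpStep p

def classicalRun (p : Fin n → Fin n) : Option (Fin n → Option (Fin n)) :=
  runProcess classicalStep p

/-- All cars park successfully under the MVP process. -/
def IsMVPParking (p : Fin n → Fin n) : Prop := (mvpRun p).isSome

/-- All cars park successfully under the classical process. -/
def IsClassicalParking (p : Fin n → Fin n) : Prop := (classicalRun p).isSome

/-- `MVPOutcome p π` means that the MVP parking process for `p` succeeds, and
car `π i` finally occupies spot `i` for all `i`; that is, `O_MVP(p) = π`. -/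
def MVPOutcome (p : Fin n → Fin n) (π : Equiv.Perm (Fin n)) : Prop :=
  ∃ occ, mvpRun p = some occ ∧ ∀ i, occ i = some (π i)

/-- `p` is a parking function: for every `k`, at least `k+1` cars prefer a spot
`≤ k` (the classical counting characterisation, 0-indexed). -/
def IsParkingFunction (p : Fin n → Fin n) : Prop :=
  ∀ k : Fin n, (k : ℕ) + 1 ≤ (univ.filter fun i => p i ≤ k).card

/-- The fibre of the MVP outcome map over `π`: parking functions with MVP
outcome `π`. -/
def FibMVP (π : Equiv.Perm (Fin n)) : Set (Fin n → Fin n) :=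
  {p | IsParkingFunction p ∧ MVPOutcome p π}

/-- The set of inversions of `π` (where `π i` is the car occupying spot `i`):
pairs `(j, i)` with `j < i` and `π j > π i`. These are the edges of the
inversion graph `G_π`. -/
def invFinset (π : Equiv.Perm (Fin n)) : Finset (Fin n × Fin n) :=
  univ.filter fun e => e.1 < e.2 ∧ π e.2 < π e.1

/-- The left-inversions of `π` at `i`. -/
def lInv (π : Equiv.Perm (Fin n)) (i : Fin n) : Finset (Fin n) :=
  univ.filter fun j => j < i ∧ π i < π j

/-- A 1-subgraph of the inversion graph of `π`: a set of inversions with at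
most one incident left-arc at each vertex. -/
def IsOneSubgraph (π : Equiv.Perm (Fin n)) (S : Finset (Fin n × Fin n)) : Prop :=
  S ⊆ invFinset π ∧ ∀ i j j' : Fin n, (j, i) ∈ S → (j', i) ∈ S → j = j'

/-- The map `Ψ_{Sub→PF}`: the parking preference `p` where `p (π i) = j` if
`(j, i) ∈ S` (for the unique such `j`), and `p (π i) = i` otherwise. -/
noncomputable def subToPF (π : Equiv.Perm (Fin n)) (S : Finset (Fin n × Fin n)) :
    Fin n → Fin n := fun c =>
  if h : ∃ j, (j, π.symm c) ∈ S then h.choose else π.symm c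

/-- The map `Ψ_{PF→Sub}`: the set of inversions `(j, i)` of `π` with
`p (π i) = j`. -/
def pfToSub (π : Equiv.Perm (Fin n)) (p : Fin n → Fin n) : Finset (Fin n × Fin n) :=
  (invFinset π).filter fun e => p (π e.2) = e.1

/-- A 1-subgraph `S` is valid if the MVP outcome of `Ψ_{Sub→PF}(S)` is `π`. -/
def IsValid (π : Equiv.Perm (Fin n)) (S : Finset (Fin n × Fin n)) : Prop :=
  MVPOutcome (subToPF π S) π

/-- `π` contains the pattern `321`. -/
def Contains321 (π : Equiv.Perm (Fin n)) : Prop :=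
  ∃ i j k : Fin n, i < j ∧ j < k ∧ π k < π j ∧ π j < π i

/-- `π` contains the pattern `3412`. -/
def Contains3412 (π : Equiv.Perm (Fin n)) : Prop :=
  ∃ i j k l : Fin n, i < j ∧ j < k ∧ k < l ∧ π k < π l ∧ π l < π i ∧ π i < π j

/-- `S` is `P⃗₂`-free: there is no triple `i < j < k` with `(i,j) ∈ S` and
`(j,k) ∈ S`. -/
def P2Free (S : Finset (Fin n × Fin n)) : Prop :=
  ¬∃ i j k : Fin n, i < j ∧ j < k ∧ (i, j) ∈ S ∧ (j, k) ∈ S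

/-- `S` is horizontally separated (HS): any two distinct edges `(j,i)` and
`(j',i')` of `S` satisfy `i < j'` or `i' < j`. -/
def IsHS (S : Finset (Fin n × Fin n)) : Prop :=
  ∀ e ∈ S, ∀ e' ∈ S, e ≠ e' → e.2 < e'.1 ∨ e'.2 < e.1

/-- Steps of a Motzkin path: up, horizontal, down. -/
inductive MStep : Type
  | U : MStep
  | H : MStep
  | D : MStep
  deriving DecidableEq

/-- The height change of a step. -/
def stepVal : MStep → ℤ
  | MStep.U => 1
  | MStep.H => 0
  | MStep.D => -1

/-- The number of cars preferring spot `j` in `p`. -/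
def prefCount (p : Fin n → Fin n) (j : Fin n) : ℕ :=
  (univ.filter fun i => p i = j).card

/-- The lattice path `Φ(p)`: step `j` is `U`, `H` or `D` according to whether
spot `j` is preferred by at least two, exactly one, or no cars. -/
def Phi (p : Fin n → Fin n) : Fin n → MStep := fun j =>
  if 2 ≤ prefCount p j then MStep.U
  else if prefCount p j = 1 then MStep.H
  else MStep.D

/-- An `n`-step lattice path is a Motzkin path: it ends at height `0` and no
prefix goes below height `0`. -/
def IsMotzkinPath (φ : Fin n → MStep) : Prop :=
  (∑ j : Fin n, stepVal (φ j)) = 0 ∧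
  ∀ k : Fin n, 0 ≤ ∑ j ∈ univ.filter (fun j : Fin n => j ≤ k), stepVal (φ j)

/-- The decreasing permutation `dec_n = n(n-1)⋯1`: spot `i` gets car `n-1-i`
(0-indexed). -/
def decPerm (n : ℕ) : Equiv.Perm (Fin n) :=
  ⟨Fin.rev, Fin.rev, Fin.rev_rev, Fin.rev_rev⟩

/-- A non-crossing matching arc diagram on `{0, …, n-1}`: arcs go left to
right, each vertex is incident to at most one arc, and no two arcs cross. -/
def IsNonCrossMatching (S : Finset (Fin n × Fin n)) : Prop :=
  (∀ e ∈ S, e.1 < e.2) ∧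
  (∀ e ∈ S, ∀ e' ∈ S, e ≠ e' →
    e.1 ≠ e'.1 ∧ e.1 ≠ e'.2 ∧ e.2 ≠ e'.1 ∧ e.2 ≠ e'.2) ∧
  ¬∃ i j k l : Fin n, i < j ∧ j < k ∧ k < l ∧ (i, k) ∈ S ∧ (j, l) ∈ S

/-- A stable configuration `c` (grain counts, each `< n`) on the complete graph
`K_n` is recurrent; by Dhar's burning criterion this amounts on `K_n` to the
existence of an ordering `v` of the vertices with `c (v k) ≥ n - (k+1)` for
every `k` (0-indexed). -/
def IsRecurrentK (c : Fin n → ℕ) : Prop :=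
  (∀ i, c i < n) ∧ ∃ v : Equiv.Perm (Fin n), ∀ k : Fin n, n ≤ c (v k) + (k : ℕ) + 1

/-- Invariant of the MVP process, `P` being the set of cars already processed. -/
def MVPInv (p : Fin n → Fin n) (P : Fin n → Prop) (occ : Fin n → Option (Fin n)) : Prop :=
  (∀ c, P c → ∃ d, occ (p c) = some d ∧ c ≤ d) ∧
  (∀ s b, occ s = some b → P b ∧ p b ≤ s ∧ (p b = s ∨ ∀ c, c ≤ b → p c ≠ s))

theorem mvpInv_step (p : Fin n → Fin n) (P : Fin n → Prop) (occ occ' : Fin n → Option (Fin n))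
    (i : Fin n) (hP : ∀ c, P c ↔ c < i) (h : MVPInv p P occ)
    (hs : mvpStep occ i (p i) = some occ') : MVPInv p (fun c => c ≤ i) occ' := by
  obtain ⟨hA, hB⟩ := h
  unfold mvpStep at hs
  split at hs
  · rename_i h0
    simp only [Option.some.injEq] at hs
    subst hs
    refine ⟨fun c hc => ?_, fun s b hb => ?_⟩
    · by_cases hpc : p c = p i
      · exact ⟨i, by simp [hpc], hc⟩
      · have : c < i := lt_of_le_of_ne hc (fun h => hpc (by rw [h]))
        simpa [Function.update_of_ne hpc] using hA c ((hP c).2 this)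
    · by_cases hsi : s = p i
      · subst hsi
        simp at hb
        subst hb
        simp
      · rw [Function.update_of_ne hsi] at hb
        obtain ⟨h1, h2⟩ := hB s b hb
        exact ⟨((hP b).1 h1).le, h2⟩
  · rename_i j hj
    rw [Option.map_eq_some_iff] at hs
    obtain ⟨k, hk, rfl⟩ := hs
    have hk := List.find?_some hk
    simp only [Bool.and_eq_true, decide_eq_true_eq, Option.isNone_iff_eq_none] at hk
    obtain ⟨hsk, hfree⟩ := hk
    have hki : k ≠ p i := by
      rintro rfl
      simp at hfree
    rw [Function.update_of_ne hki] at hfree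
    have hno : ∀ c, c ≤ i → p c ≠ k := by
      intro c hc hck
      rcases hc.lt_or_eq with hlt | rfl
      · obtain ⟨d, hd, _⟩ := hA c ((hP c).2 hlt)
        rw [hck, hfree] at hd
        cases hd
      · exact hki hck.symm
    obtain ⟨hj1, hj2, -⟩ := hB _ _ hj
    have hji := (hP j).1 hj1
    refine ⟨fun c hc => ?_, fun s b hb => ?_⟩
    · rw [Function.update_of_ne (hno c hc)]
      by_cases hpc : p c = p i
      · exact ⟨i, by simp [hpc], hc⟩
      · have : c < i := lt_of_le_of_ne hc (fun h => hpc (by rw [h]))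
        simpa [Function.update_of_ne hpc] using hA c ((hP c).2 this)
    · by_cases hs : s = k
      · subst hs
        simp at hb
        subst hb
        exact ⟨hji.le, hj2.trans hsk, Or.inr fun c hc => hno c (hc.trans hji.le)⟩
      · rw [Function.update_of_ne hs] at hb
        by_cases hsi : s = p i
        · subst hsi
          simp at hb
          subst hb
          simp
        · rw [Function.update_of_ne hsi] at hb
          obtain ⟨h1, h2⟩ := hB s b hb
          exact ⟨((hP b).1 h1).le, h2⟩

theorem mvpInv_fold (p : Fin n → Fin n) : ∀ (l : List (Fin n)) (P : Fin n → Prop)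
    (occ occ' : Fin n → Option (Fin n)), l.Pairwise (· < ·) → (∀ c, P c ↔ c ∉ l) →
    (∀ c d, P c → d ∈ l → c < d) → MVPInv p P occ →
    List.foldlM (fun occ i => mvpStep occ i (p i)) occ l = some occ' →
    MVPInv p (fun _ => True) occ' := by
  intro l
  induction l with
  | nil =>
    intro P occ occ' _ hP _ h hf
    simp at hf
    subst hf
    have : P = fun _ => True := by funext c; simp [hP]
    rwa [← this]
  | cons i l ih =>
    intro P occ occ' hl hP hlt h hf
    rw [List.foldlM_cons] at hf
    obtain ⟨occ1, h1, h2⟩ := Option.bind_eq_some_iff.1 hf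
    rw [List.pairwise_cons] at hl
    have hPi : ∀ c, P c ↔ c < i := by
      intro c
      refine ⟨fun hc => hlt c i hc (by simp), fun hc => (hP c).2 fun hm => ?_⟩
      rcases List.mem_cons.1 hm with rfl | hm
      · exact lt_irrefl _ hc
      · exact lt_asymm hc (hl.1 c hm)
    refine ih (fun c => c ≤ i) occ1 occ' hl.2 (fun c => ?_) (fun c d hc hd => ?_)
      (mvpInv_step p P occ occ1 i hPi h h1) h2
    · refine ⟨fun hc hm => absurd (hl.1 c hm) (not_lt.2 hc), fun hc => ?_⟩
      by_contra hci
      have : ¬ P c := fun h => hci ((hPi c).1 h).le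
      rw [hP, not_not, List.mem_cons] at this
      rcases this with rfl | h
      · exact hci le_rfl
      · exact hc h
    · exact lt_of_le_of_lt hc (hl.1 d hd)

theorem outcome_props (p : Fin n → Fin n) (π : Equiv.Perm (Fin n)) (h : MVPOutcome p π) :
    (∀ c, c ≤ π (p c)) ∧
    (∀ i, p (π i) ≤ i ∧ (p (π i) = i ∨ ∀ c, c ≤ π i → p c ≠ i)) := by
  obtain ⟨occ, hrun, hocc⟩ := h
  have := mvpInv_fold p (List.finRange n) (fun _ => False) (fun _ => none) occ
    (List.pairwise_lt_finRange n) (by simp) (by simp) (by simp [MVPInv]) hrun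
  obtain ⟨hA, hB⟩ := this
  refine ⟨fun c => ?_, fun i => (hB i (π i) (hocc i)).2⟩
  obtain ⟨d, hd, hcd⟩ := hA c trivial
  rw [hocc] at hd
  rw [Option.some.inj hd]
  exact hcd

theorem outcome_no_path (p : Fin n → Fin n) (π : Equiv.Perm (Fin n)) (h : MVPOutcome p π)
    (i j k : Fin n) (hij : i < j) (h1 : p (π j) = i) (h2 : p (π k) = j) (hlt : π k < π j) :
    False := by
  rcases ((outcome_props p π h).2 j).2 with h3 | h3
  · rw [h1] at h3; exact hij.ne h3
  · exact h3 _ hlt.le h2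

theorem subToPF_of_mem (π : Equiv.Perm (Fin n)) (S : Finset (Fin n × Fin n))
    (hS : IsOneSubgraph π S) (i j : Fin n) (h : (i, j) ∈ S) : subToPF π S (π j) = i := by
  have hex : ∃ a, (a, π.symm (π j)) ∈ S := ⟨i, by simpa using h⟩
  unfold subToPF
  rw [dif_pos hex]
  have := hex.choose_spec
  exact hS.2 j _ _ (by simpa using this) h

/-- every valid 1-subgraph is `P⃗₂`-free; consequently
`|Fib_n(π)|` is at most the number of `P⃗₂`-free 1-subgraphs. -/
theorem statement5 (n : ℕ) (π : Equiv.Perm (Fin n)) :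
    (∀ S : Finset (Fin n × Fin n), IsOneSubgraph π S → IsValid π S → P2Free S) ∧
    (FibMVP π).ncard ≤
      {S : Finset (Fin n × Fin n) | IsOneSubgraph π S ∧ P2Free S}.ncard := by
  refine ⟨fun S hS hv => ?_, ?_⟩
  · rintro ⟨i, j, k, hij, hjk, h1, h2⟩
    have := hS.1 h2
    simp only [invFinset, Finset.mem_filter] at this
    exact outcome_no_path _ π hv i j k hij (subToPF_of_mem π S hS i j h1)
      (subToPF_of_mem π S hS j k h2) this.2.2
  · refine Set.ncard_le_ncard_of_injOn (pfToSub π) ?_ ?_ (Set.toFinite _)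
    · rintro p ⟨-, hp⟩
      refine ⟨⟨Finset.filter_subset _ _, ?_⟩, ?_⟩
      · intro i j j' h h'
        simp only [pfToSub, Finset.mem_filter] at h h'
        exact h.2.symm.trans h'.2
      · rintro ⟨i, j, k, hij, hjk, h1, h2⟩
        simp only [pfToSub, invFinset, Finset.mem_filter] at h1 h2
        exact outcome_no_path p π hp i j k hij h1.2 h2.2 h2.1.2.2
    · have key : ∀ p q : Fin n → Fin n, MVPOutcome p π → pfToSub π p = pfToSub π q →
          ∀ i, p (π i) ≠ i → q (π i) = p (π i) := by
        intro p q hp he i hi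
        obtain ⟨hA, hB⟩ := outcome_props p π hp
        have hm : (p (π i), i) ∈ pfToSub π p := by
          simp only [pfToSub, invFinset, Finset.mem_filter, Finset.mem_univ, true_and, and_true]
          exact ⟨lt_of_le_of_ne (hB i).1 hi,
            lt_of_le_of_ne (hA (π i)) fun h => hi (π.injective h).symm⟩
        rw [he] at hm
        simp only [pfToSub, Finset.mem_filter] at hm
        exact hm.2
      rintro p ⟨-, hp⟩ q ⟨-, hq⟩ he
      funext c
      obtain ⟨i, rfl⟩ := π.surjective c
      by_cases h1 : p (π i) = i
      · by_cases h2 : q (π i) = i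
        · rw [h1, h2]
        · exact key q p hq he.symm i h2
      · exact (key p q hp he i h1).symm

end MVPPaper
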